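/- Let (A,Λ) be an associative form ring with 1, n ≥ 3, and let (I,Γ), (J,Δ) be form ideals of (A,Λ). Then for any i ≠ j and any a, a₁, a₂ ∈ (I,Γ), b, b₁, b₂ ∈ (J,Δ) (with membership taken relative to the position in question), the following congruences hold modulo EU(2n,(I,Γ)∘(J,Δ)): (1) Y_ij(a₁+a₂, b) ≡ Y_ij(a₁,b)·Y_ij(a₂,b); (2) Y_ij(a, b₁+b₂) ≡ Y_ij(a,b₁)·Y_ij(a,b₂); (3) Y_ij(a,b)⁻¹ ≡ Y_ij(−a,b) ≡ Y_ij(a,−b); (4) for i ≠ ±j, Y_ij(ab₁, b₂) ≡ Y_ij(a₁, a₂b) ≡ e; (5) Y_{i,−i}(b̄₁ab₁, b₂) ≡ Y_{i,−i}(a₁, ā₂ba₂) ≡ e. Here x ≡ y modulo a subgroup H means xy⁻¹ ∈ H. -/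

import Mathlib

open Matrix
open scoped commutatorElement

/-- Bak's form ring data on a ring `A`: an involution `bar`, a central symmetry
`λ` with `λ λ̄ = 1`, and a form parameter `Λ`. -/
structure FormRingData (A : Type*) [Ring A] where
  bar : A →+ A
  bar_mul : ∀ a b : A, bar (a * b) = bar b * bar a
  bar_bar : ∀ a : A, bar (bar a) = a
  lam : A
  lam_comm : ∀ a : A, lam * a = a * lam
  lam_bar : lam * bar lam = 1
  Lambda : AddSubgroup A
  lambdaMin_mem : ∀ c : A, c - lam * bar c ∈ Lambda
  lambdaMax_mem : ∀ x ∈ Lambda, x = -(lam * bar x)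
  lambda_conj : ∀ (c : A), ∀ x ∈ Lambda, c * x * bar c ∈ Lambda

namespace FormRingData

variable {A : Type*} [Ring A]

/-- Integral powers of the symmetry `λ`; negative powers use `λ̄ = λ⁻¹`. -/
def lpow (D : FormRingData A) (k : ℤ) : A :=
  if 0 ≤ k then D.lam ^ k.toNat else (D.bar D.lam) ^ (-k).toNat

end FormRingData

/-- The index set `Ω = {1,…,n,−n,…,−1}`, coded as `Fin n × Bool`
(second component `true` = positive index). -/
abbrev Idx (n : ℕ) := Fin n × Bool

namespace Idx

/-- The involution `i ↦ −i` on indices. -/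
def neg {n : ℕ} (i : Idx n) : Idx n := (i.1, !i.2)

/-- The sign `ε(i) ∈ {±1}`. -/
def eps {n : ℕ} (i : Idx n) : ℤ := if i.2 then 1 else -1

theorem neg_ne {n : ℕ} (i : Idx n) : neg i ≠ i := by
  simp [neg, Prod.ext_iff]

theorem neg_injective {n : ℕ} : Function.Injective (neg (n := n)) := by
  intro i j h
  simp only [neg, Prod.mk.injEq] at h
  refine Prod.ext h.1 ?_
  have h2 := h.2
  cases hi : i.2 <;> cases hj : j.2 <;> simp_all

theorem neg_neg {n : ℕ} (i : Idx n) : neg (neg i) = i := by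
  simp [neg]

end Idx

/-- `GL(2n, A)`, realised as the units of the `Ω × Ω` matrix ring over `A`. -/
abbrev GLn (A : Type*) [Ring A] (n : ℕ) := (Matrix (Idx n) (Idx n) A)ˣ

section aux

theorem one_add_mul_one_sub {R : Type*} [Ring R] {X : R} (h : X * X = 0) :
    (1 + X) * (1 - X) = 1 := by
  have hh : (1 + X) * (1 - X) = 1 - X * X := by noncomm_ring
  rw [hh, h, sub_zero]

theorem one_sub_mul_one_add {R : Type*} [Ring R] {X : R} (h : X * X = 0) :
    (1 - X) * (1 + X) = 1 := by
  have hh : (1 - X) * (1 + X) = 1 - X * X := by noncomm_ring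
  rw [hh, h, sub_zero]

theorem stdBasisMatrix_neg' {A : Type*} [Ring A] {n : ℕ} (i j : Idx n) (c : A) :
    Matrix.single i j (-c) = -Matrix.single i j c := by
  refine eq_neg_of_add_eq_zero_left ?_
  rw [← Matrix.single_add]
  simp

end aux

namespace FormRingData

variable {A : Type*} [Ring A] {n : ℕ}

/-- The off-diagonal part of a short root element. -/
def Xmat (D : FormRingData A) (i j : Idx n) (c : A) : Matrix (Idx n) (Idx n) A :=
  Matrix.single i j c -
    Matrix.single (Idx.neg j) (Idx.neg i) (D.lpow ((Idx.eps j - Idx.eps i) / 2) * D.bar c)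

theorem Xmat_mul (D : FormRingData A) {i j : Idx n} (hij : i ≠ j) (c c' : A) :
    D.Xmat i j c * D.Xmat i j c' = 0 := by
  unfold Xmat
  rw [sub_mul, mul_sub, mul_sub,
    Matrix.single_mul_single_of_ne _ _ _ _ (Ne.symm hij),
    Matrix.single_mul_single_of_ne _ _ _ _ (Ne.symm (Idx.neg_ne j)),
    Matrix.single_mul_single_of_ne _ _ _ _ (Idx.neg_ne i),
    Matrix.single_mul_single_of_ne _ _ _ _ (fun h => hij (Idx.neg_injective h))]
  simp

theorem Xmat_neg (D : FormRingData A) (i j : Idx n) (c : A) :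
    D.Xmat i j (-c) = -D.Xmat i j c := by
  unfold Xmat
  rw [map_neg, mul_neg, stdBasisMatrix_neg', stdBasisMatrix_neg']
  abel

/-- The elementary short root unipotent `T_{ij}(c)`, for `i ≠ ±j`
(with junk value `1` when `i = j`). -/
def TS (D : FormRingData A) (i j : Idx n) (c : A) : GLn A n :=
  if h : i = j then 1 else
    { val := 1 + D.Xmat i j c
      inv := 1 + D.Xmat i j (-c)
      val_inv := by
        rw [D.Xmat_neg, ← sub_eq_add_neg]
        exact one_add_mul_one_sub (D.Xmat_mul h c c)
      inv_val := by
        rw [D.Xmat_neg, ← sub_eq_add_neg]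
        exact one_sub_mul_one_add (D.Xmat_mul h c c) }

/-- The elementary long root unipotent `T_{i,−i}(c)`. -/
def TL (D : FormRingData A) (i : Idx n) (c : A) : GLn A n where
  val := 1 + Matrix.single i (Idx.neg i) c
  inv := 1 + Matrix.single i (Idx.neg i) (-c)
  val_inv := by
    rw [stdBasisMatrix_neg', ← sub_eq_add_neg]
    exact one_add_mul_one_sub (Matrix.single_mul_single_of_ne _ _ _ _ (Idx.neg_ne i) _)
  inv_val := by
    rw [stdBasisMatrix_neg', ← sub_eq_add_neg]
    exact one_sub_mul_one_add (Matrix.single_mul_single_of_ne _ _ _ _ (Idx.neg_ne i) _)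

/-- The elementary unitary transvection `T_{ij}(c)` (long or short root type
according to whether `j = −i`). -/
def T (D : FormRingData A) (i j : Idx n) (c : A) : GLn A n :=
  if j = Idx.neg i then D.TL i c else D.TS i j c

/-- The elementary commutator `Y_{ij}(a,b) = [T_{ij}(a), T_{ji}(b)]`. -/
def Y (D : FormRingData A) (i j : Idx n) (a b : A) : GLn A n :=
  ⁅D.T i j a, D.T j i b⁆

/-- The elementary conjugate `Z_{ij}(a,c) = T_{ji}(c) T_{ij}(a) T_{ji}(−c)`. -/
def Z (D : FormRingData A) (i j : Idx n) (a c : A) : GLn A n :=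
  D.T j i c * D.T i j a * D.T j i (-c)

/-- The set of elementary unitary transvections of level `(I,Γ)`. -/
def transvGen (D : FormRingData A) (n : ℕ) (I Γ : AddSubgroup A) : Set (GLn A n) :=
  {x | ∃ i j : Idx n, i ≠ j ∧ i ≠ Idx.neg j ∧ ∃ c ∈ I, x = D.TS i j c} ∪
    {x | ∃ i : Idx n, ∃ g ∈ Γ, x = D.TL i (D.lpow (-(Idx.eps i + 1) / 2) * g)}

/-- The unrelative elementary subgroup `FU(2n, I, Γ)`. -/
def FU (D : FormRingData A) (n : ℕ) (I Γ : AddSubgroup A) : Subgroup (GLn A n) :=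
  Subgroup.closure (D.transvGen n I Γ)

/-- The absolute elementary unitary group `EU(2n, A, Λ)`. -/
def EUmax (D : FormRingData A) (n : ℕ) : Subgroup (GLn A n) :=
  D.FU n ⊤ D.Lambda

/-- The relative elementary subgroup `EU(2n, I, Γ)`: the normal closure of
`FU(2n, I, Γ)` in `EU(2n, A, Λ)`. -/
def EU (D : FormRingData A) (n : ℕ) (I Γ : AddSubgroup A) : Subgroup (GLn A n) :=
  Subgroup.closure {x | ∃ g ∈ D.EUmax n, ∃ t ∈ D.transvGen n I Γ, x = g * t * g⁻¹}

/-- The additive subgroup generated by products `st`, `s ∈ S`, `t ∈ T`. -/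
def mulSub (S T : AddSubgroup A) : AddSubgroup A :=
  AddSubgroup.closure {x | ∃ a ∈ S, ∃ b ∈ T, x = a * b}

/-- The symmetrised product `ST + TS` of two (additive subgroups underlying)
two-sided ideals. -/
def symI (S T : AddSubgroup A) : AddSubgroup A :=
  mulSub S T ⊔ mulSub T S

/-- The minimal relative form parameter `Γ_min(K)` of level `K`. -/
def gammaMin (D : FormRingData A) (K : AddSubgroup A) : AddSubgroup A :=
  AddSubgroup.closure
    ({x | ∃ a ∈ K, x = a - D.lam * D.bar a} ∪
      {x | ∃ a ∈ K, ∃ c ∈ D.Lambda, x = a * c * D.bar a})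

/-- The relative form parameter `ˢΓ = ⟨ b γ b̄ ∣ b ∈ S, γ ∈ Γ ⟩`. -/
def conjPar (D : FormRingData A) (S Γ : AddSubgroup A) : AddSubgroup A :=
  AddSubgroup.closure {x | ∃ b ∈ S, ∃ g ∈ Γ, x = b * g * D.bar b}

/-- The relative form parameter of the symmetrised product
`(I,Γ)∘(J,Δ) = (IJ+JI, Γ_min(IJ+JI) + ᴶΓ + ᴵΔ)`. -/
def symG (D : FormRingData A) (I Γ J Δ : AddSubgroup A) : AddSubgroup A :=
  D.gammaMin (symI I J) ⊔ D.conjPar J Γ ⊔ D.conjPar I Δ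

/-- The elementary subgroup `EU(2n, (I,Γ)∘(J,Δ))` of the symmetrised product. -/
def EUsym (D : FormRingData A) (n : ℕ) (I Γ J Δ : AddSubgroup A) : Subgroup (GLn A n) :=
  D.EU n (symI I J) (D.symG I Γ J Δ)

/-- Position-dependent membership `a ∈ (I,Γ)` at position `(i,j)`:
`a ∈ I` for a short root position, `a ∈ λ^{−(ε(i)+1)/2}Γ` for a long one. -/
def pmem (D : FormRingData A) (I Γ : AddSubgroup A) {n : ℕ} (i j : Idx n) (a : A) : Prop :=
  if j = Idx.neg i then ∃ g ∈ Γ, a = D.lpow (-(Idx.eps i + 1) / 2) * g else a ∈ I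

end FormRingData

/-- A form ideal `(I,Γ)` of the form ring `(A,Λ)`. -/
structure FormIdeal {A : Type*} [Ring A] (D : FormRingData A) where
  I : AddSubgroup A
  Gamma : AddSubgroup A
  mul_mem_left : ∀ (c : A), ∀ x ∈ I, c * x ∈ I
  mul_mem_right : ∀ (c : A), ∀ x ∈ I, x * c ∈ I
  bar_mem : ∀ x ∈ I, D.bar x ∈ I
  gammaMin_le : D.gammaMin I ≤ Gamma
  gamma_le_I : Gamma ≤ I
  gamma_le_Lambda : Gamma ≤ D.Lambda
  gamma_conj : ∀ (c : A), ∀ x ∈ Gamma, c * x * D.bar c ∈ Gamma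

set_option linter.unusedSimpArgs false
set_option linter.unusedVariables false

section grp

variable {H : Type*} [Group H]

/-- `g` commutes with `z` modulo `N`, `g` in `M`. -/
def cmz (N M : Subgroup H) (hN : ∀ g ∈ M, ∀ x ∈ N, g * x * g⁻¹ ∈ N) (z : H) : Subgroup H where
  carrier := {g | g ∈ M ∧ ⁅z, g⁆ ∈ N}
  one_mem' := ⟨M.one_mem, by simp⟩
  mul_mem' := by
    rintro g h ⟨hg, hg'⟩ ⟨hh, hh'⟩
    refine ⟨M.mul_mem hg hh, ?_⟩
    have e : ⁅z, g * h⁆ = ⁅z, g⁆ * (g * ⁅z, h⁆ * g⁻¹) := by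
      simp only [commutatorElement_def]; group
    rw [e]
    exact N.mul_mem hg' (hN g hg _ hh')
  inv_mem' := by
    rintro g ⟨hg, hg'⟩
    refine ⟨M.inv_mem hg, ?_⟩
    have e : ⁅z, g⁻¹⁆ = g⁻¹ * ⁅z, g⁆⁻¹ * g⁻¹⁻¹ := by
      simp only [commutatorElement_def]; group
    rw [e]
    exact hN _ (M.inv_mem hg) _ (N.inv_mem hg')

theorem comm_comm_aux {Q : Type*} [Group Q] {x y t s : Q} (h : y * t = t * s * y)
    (h1 : Commute x t) (h2 : Commute x s) (h3 : Commute y s) : Commute ⁅x, y⁆ t := by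
  have e1 : y⁻¹ * t * y = t * s⁻¹ := by
    have : y * (t * s⁻¹) = t * y := by
      rw [← mul_assoc, h, mul_assoc, h3.inv_right.eq, ← mul_assoc]; simp
    rw [mul_assoc, ← this]; simp
  have e2 : x⁻¹ * (t * s⁻¹) * x = t * s⁻¹ := by
    have := (h1.mul_right h2.inv_right).eq
    rw [mul_assoc, ← this]; simp
  have e3 : y * (t * s⁻¹) * y⁻¹ = t := by rw [← e1]; group
  have e4 : x * t * x⁻¹ = t := by rw [h1.eq]; simp
  have e5 : ⁅x, y⁆ * t * ⁅x, y⁆⁻¹ = t := by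
    calc ⁅x, y⁆ * t * ⁅x, y⁆⁻¹
        = x * (y * (x⁻¹ * (y⁻¹ * t * y) * x) * y⁻¹) * x⁻¹ := by
          simp only [commutatorElement_def]; group
      _ = t := by rw [e1, e2, e3, e4]
  exact mul_inv_eq_iff_eq_mul.mp e5

variable {N M : Subgroup H}

theorem conj_mem' (hN : ∀ g ∈ M, ∀ x ∈ N, g * x * g⁻¹ ∈ N) {g x : H} (hg : g ∈ M) (hx : x ∈ N) : g⁻¹ * x * g ∈ N := by
  simpa using hN g⁻¹ (M.inv_mem hg) x hx

theorem nrm (hN : ∀ g ∈ M, ∀ x ∈ N, g * x * g⁻¹ ∈ N) : (N.subgroupOf M).Normal := by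
  constructor
  rintro ⟨x, hx⟩ h ⟨g, hg⟩
  exact hN g hg x h

theorem comm_comm (hN : ∀ g ∈ M, ∀ x ∈ N, g * x * g⁻¹ ∈ N) {x y t s : H} (hx : x ∈ M) (hy : y ∈ M) (ht : t ∈ M) (h : y * t = t * s * y)
    (h1 : ⁅x, t⁆ ∈ N) (h2 : ⁅x, s⁆ ∈ N) (h3 : ⁅y, s⁆ ∈ N) : ⁅⁅x, y⁆, t⁆ ∈ N := by
  have := nrm hN
  have hs : s ∈ M := by
    have : s = t⁻¹ * (y * t) * y⁻¹ := by rw [h]; group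
    rw [this]
    exact M.mul_mem (M.mul_mem (M.inv_mem ht) (M.mul_mem hy ht)) (M.inv_mem hy)
  have key : ∀ u v : M, ⁅(u : H), (v : H)⁆ ∈ N ↔
      Commute (QuotientGroup.mk' (N.subgroupOf M) u) (QuotientGroup.mk' (N.subgroupOf M) v) := by
    intro u v
    rw [← commutatorElement_eq_one_iff_commute, ← map_commutatorElement]
    rw [QuotientGroup.mk'_apply, QuotientGroup.eq_one_iff]
    rfl
  have := (key ⁅(⟨x, hx⟩ : M), (⟨y, hy⟩ : M)⁆ ⟨t, ht⟩).2 (by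
    rw [map_commutatorElement]
    refine comm_comm_aux (s := QuotientGroup.mk' (N.subgroupOf M) ⟨s, hs⟩) ?_ ((key ⟨x, hx⟩ ⟨t, ht⟩).1 h1)
      ((key ⟨x, hx⟩ ⟨s, hs⟩).1 h2) ((key ⟨y, hy⟩ ⟨s, hs⟩).1 h3)
    rw [← map_mul, ← map_mul, ← map_mul]
    congr 1
    exact Subtype.ext h)
  exact this

theorem add1 (hN : ∀ g ∈ M, ∀ x ∈ N, g * x * g⁻¹ ∈ N) {x₁ x₂ y : H} (hx₁ : x₁ ∈ M) (hy : y ∈ M) (h1 : ⁅⁅x₂, y⁆, x₁⁆ ∈ N)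
    (h2 : ⁅⁅x₂, y⁆, y⁆ ∈ N) : ⁅x₁ * x₂, y⁆ * (⁅x₁, y⁆ * ⁅x₂, y⁆)⁻¹ ∈ N := by
  have c1 : x₁ ∈ cmz N M hN ⁅x₂, y⁆ := ⟨hx₁, h1⟩
  have c2 : y ∈ cmz N M hN ⁅x₂, y⁆ := ⟨hy, h2⟩
  have c3 : y * x₁⁻¹ * y⁻¹ ∈ cmz N M hN ⁅x₂, y⁆ :=
    mul_mem (mul_mem c2 (inv_mem c1)) (inv_mem c2)
  have := hN x₁ hx₁ _ c3.2
  convert this using 1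
  simp only [commutatorElement_def]; group

theorem add2 (hN : ∀ g ∈ M, ∀ x ∈ N, g * x * g⁻¹ ∈ N) {x y₁ y₂ : H} (hx : x ∈ M) (hy₁ : y₁ ∈ M) (h1 : ⁅⁅x, y₂⁆, y₁⁆ ∈ N) :
    ⁅x, y₁ * y₂⁆ * (⁅x, y₁⁆ * ⁅x, y₂⁆)⁻¹ ∈ N := by
  have h2 : ⁅y₁, ⁅x, y₂⁆⁆ ∈ N := by
    rw [← commutatorElement_inv]; exact N.inv_mem h1
  have : ⁅x, y₁⁆ ∈ M := by
    rw [commutatorElement_def]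
    exact mul_mem (mul_mem (mul_mem hx hy₁) (inv_mem hx)) (inv_mem hy₁)
  have := hN _ this _ h2
  convert this using 1
  simp only [commutatorElement_def]; group

theorem commL (hN : ∀ g ∈ M, ∀ x ∈ N, g * x * g⁻¹ ∈ N) {x y : H} (hx : x ∈ N) (hy : y ∈ M) : ⁅x, y⁆ ∈ N := by
  rw [commutatorElement_def, mul_assoc, mul_assoc, ← mul_assoc y]
  exact mul_mem hx (hN y hy _ (inv_mem hx))

theorem commR (hN : ∀ g ∈ M, ∀ x ∈ N, g * x * g⁻¹ ∈ N) {x y : H} (hx : x ∈ M) (hy : y ∈ N) : ⁅x, y⁆ ∈ N := by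
  rw [commutatorElement_def]
  exact mul_mem (hN x hx _ hy) (inv_mem hy)

theorem commRel (hN : ∀ g ∈ M, ∀ x ∈ N, g * x * g⁻¹ ∈ N) {x u m : H} (hu : u ∈ M) (hm : m ∈ N) (h : x * u = u * m * x) : ⁅x, u⁆ ∈ N := by
  rw [commutatorElement_def, h]
  simpa using hN u hu m hm

end grp

namespace FormRingData

variable {A : Type*} [Ring A] {n : ℕ} (D : FormRingData A)

theorem bar_one : D.bar 1 = 1 := by
  have := D.bar_mul 1 (D.bar 1)
  simpa [D.bar_bar] using this.symm

theorem bar_lam_mul : D.bar D.lam * D.lam = 1 := by rw [← D.lam_comm, D.lam_bar]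

theorem bar_lam_comm (a : A) : D.bar D.lam * a = a * D.bar D.lam := by
  have := congrArg D.bar (D.lam_comm (D.bar a))
  simpa [D.bar_mul, D.bar_bar] using this.symm

theorem lpow_comm (k : ℤ) (a : A) : D.lpow k * a = a * D.lpow k := by
  unfold lpow
  split_ifs
  · exact (Commute.pow_left (D.lam_comm a) _).eq
  · exact (Commute.pow_left (D.bar_lam_comm a) _).eq

@[simp] theorem lpow_zero : D.lpow 0 = 1 := by simp [lpow]
@[simp] theorem lpow_one : D.lpow 1 = D.lam := by simp [lpow]
@[simp] theorem lpow_neg_one : D.lpow (-1) = D.bar D.lam := by simp [lpow]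

theorem lpow_eps (i j k : Idx n) :
    D.lpow ((Idx.eps j - Idx.eps i) / 2) * D.lpow ((Idx.eps k - Idx.eps j) / 2) =
      D.lpow ((Idx.eps k - Idx.eps i) / 2) := by
  rcases i with ⟨i, _ | _⟩ <;> rcases j with ⟨j, _ | _⟩ <;> rcases k with ⟨k, _ | _⟩ <;>
    simp [Idx.eps, D.lam_bar, D.bar_lam_mul]

theorem bar_lpow_eps (i j : Idx n) :
    D.bar (D.lpow ((Idx.eps j - Idx.eps i) / 2)) = D.lpow ((Idx.eps i - Idx.eps j) / 2) := by
  rcases i with ⟨i, _ | _⟩ <;> rcases j with ⟨j, _ | _⟩ <;>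
    simp [Idx.eps, D.bar_one, D.bar_bar]

theorem eps_neg (i : Idx n) : Idx.eps (Idx.neg i) = -Idx.eps i := by
  rcases i with ⟨i, _ | _⟩ <;> simp [Idx.eps, Idx.neg]

theorem TS_val {i j : Idx n} (h : i ≠ j) (c : A) :
    (D.TS i j c : Matrix (Idx n) (Idx n) A) = 1 + D.Xmat i j c := by
  simp [TS, h]

theorem TL_val (i : Idx n) (c : A) :
    (D.TL i c : Matrix (Idx n) (Idx n) A) = 1 + Matrix.single i (Idx.neg i) c := rfl

theorem ne_of {i j : Idx n} (h : i.1 ≠ j.1) : i ≠ j := fun e => h (by rw [e])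
theorem ne_of1 {i j : Idx n} (h : i.1 ≠ j.1) : Idx.neg i ≠ j := fun e => h (by rw [← e]; rfl)
theorem ne_of2 {i j : Idx n} (h : i.1 ≠ j.1) : i ≠ Idx.neg j := fun e => h (by rw [e]; rfl)

theorem fst_ne {i j : Idx n} (h : i ≠ j) (h' : i ≠ Idx.neg j) : i.1 ≠ j.1 := by
  rcases i with ⟨i, _ | _⟩ <;> rcases j with ⟨j, _ | _⟩ <;> simp_all [Idx.neg]

theorem TS_add (i j : Idx n) (h : i ≠ j) (a b : A) :
    D.TS i j (a + b) = D.TS i j a * D.TS i j b := by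
  apply Units.ext
  have e : D.Xmat i j (a + b) = D.Xmat i j a + D.Xmat i j b := by
    simp only [Xmat, map_add, mul_add, Matrix.single_add]; abel
  rw [Units.val_mul, D.TS_val h, D.TS_val h, D.TS_val h, mul_add, add_mul, add_mul,
    D.Xmat_mul h, e]
  simp only [one_mul, mul_one]; abel

theorem TL_add (i : Idx n) (a b : A) :
    D.TL i (a + b) = D.TL i a * D.TL i b := by
  apply Units.ext
  rw [Units.val_mul, D.TL_val, D.TL_val, D.TL_val, mul_add, add_mul, add_mul,
    Matrix.single_mul_single_of_ne _ _ _ _ (Idx.neg_ne i), Matrix.single_add]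
  simp only [one_mul, mul_one]; abel

theorem TS_sym (i j : Idx n) (h : i ≠ j) (c : A) :
    D.TS i j c = D.TS (Idx.neg j) (Idx.neg i) (-(D.lpow ((Idx.eps j - Idx.eps i) / 2) * D.bar c)) := by
  apply Units.ext
  have h' : Idx.neg j ≠ Idx.neg i := fun e => h (Idx.neg_injective e).symm
  rw [D.TS_val h, D.TS_val h']
  congr 1
  unfold Xmat
  rw [Idx.neg_neg, Idx.neg_neg, eps_neg, eps_neg, map_neg, D.bar_mul, D.bar_bar, D.bar_lpow_eps,
    mul_neg, ← D.lpow_comm, ← mul_assoc]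
  have : (-Idx.eps i - -Idx.eps j) = Idx.eps j - Idx.eps i := by ring
  rw [this, D.lpow_eps]
  simp [stdBasisMatrix_neg', Idx.eps]
  abel

theorem lam_swap (q : A) (hq : ∀ x, q * x = x * q) (p : A) (c b : A) :
    p * c * (q * b) = p * q * (c * b) := by
  rw [← mul_assoc, mul_assoc p c q, ← hq c]
  simp only [mul_assoc]

theorem R_short {i j h : Idx n} (hij : i.1 ≠ j.1) (hih : i.1 ≠ h.1) (hjh : j.1 ≠ h.1) (b c : A) :
    D.TS j i b * D.TS i h c = D.TS i h c * D.TS j h (b * c) * D.TS j i b := by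
  apply Units.ext
  simp only [Units.val_mul]
  rw [D.TS_val (ne_of hij.symm), D.TS_val (ne_of hih), D.TS_val (ne_of hjh)]
  have e : D.lpow ((Idx.eps h - Idx.eps i) / 2) * D.bar c *
      (D.lpow ((Idx.eps i - Idx.eps j) / 2) * D.bar b) =
      D.lpow ((Idx.eps h - Idx.eps j) / 2) * (D.bar c * D.bar b) := by
    rw [← D.lpow_eps j i h, D.lpow_comm ((Idx.eps i - Idx.eps j) / 2) (D.lpow _)]
    exact lam_swap _ (D.lpow_comm _) _ _ _
  unfold Xmat
  simp only [mul_add, add_mul, mul_sub, sub_mul, one_mul, mul_one, Matrix.single_mul_single_same, D.bar_mul, e,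
    Matrix.single_mul_single_of_ne, ne_of hij, ne_of hij.symm, ne_of hih, ne_of hih.symm, ne_of hjh, ne_of hjh.symm,
    ne_of1 hij, ne_of1 hij.symm, ne_of1 hih, ne_of1 hih.symm, ne_of1 hjh, ne_of1 hjh.symm,
    ne_of2 hij, ne_of2 hij.symm, ne_of2 hih, ne_of2 hih.symm, ne_of2 hjh, ne_of2 hjh.symm,
    Idx.neg_ne, (Idx.neg_ne _).symm, Idx.neg_injective.ne_iff, ne_eq, not_false_eq_true, zero_mul, mul_zero,
    Idx.neg_injective.eq_iff]
  abel

theorem C_short {i j h : Idx n} (hij : i.1 ≠ j.1) (hih : i.1 ≠ h.1) (hjh : j.1 ≠ h.1) (b c : A) :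
    D.TS i j b * D.TS i h c = D.TS i h c * D.TS i j b := by
  apply Units.ext
  simp only [Units.val_mul]
  rw [D.TS_val (ne_of hij), D.TS_val (ne_of hih)]
  unfold Xmat
  simp only [mul_add, add_mul, mul_sub, sub_mul, one_mul, mul_one, 
    Matrix.single_mul_single_of_ne, ne_of hij, ne_of hij.symm, ne_of hih, ne_of hih.symm, ne_of hjh, ne_of hjh.symm,
    ne_of1 hij, ne_of1 hij.symm, ne_of1 hih, ne_of1 hih.symm, ne_of1 hjh, ne_of1 hjh.symm,
    ne_of2 hij, ne_of2 hij.symm, ne_of2 hih, ne_of2 hih.symm, ne_of2 hjh, ne_of2 hjh.symm,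
    Idx.neg_ne, (Idx.neg_ne _).symm, ne_eq, not_false_eq_true,
    Idx.neg_injective.eq_iff]
  abel

/-- `TL i a` commutes with `TS i h c`. -/
theorem C_long {i h : Idx n} (hih : i.1 ≠ h.1) (b c : A) :
    D.TL i b * D.TS i h c = D.TS i h c * D.TL i b := by
  apply Units.ext
  simp only [Units.val_mul]
  rw [D.TS_val (ne_of hih), D.TL_val]
  unfold Xmat
  simp only [mul_add, add_mul, mul_sub, sub_mul, one_mul, mul_one, 
    Matrix.single_mul_single_of_ne, ne_of hih, ne_of hih.symm, 
    ne_of1 hih, ne_of1 hih.symm, ne_of2 hih, ne_of2 hih.symm, 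
    Idx.neg_ne, (Idx.neg_ne _).symm, ne_eq, not_false_eq_true,
    Idx.neg_injective.eq_iff]
  abel

theorem C_ll {i h : Idx n} (hih : i.1 ≠ h.1) (b c : A) :
    D.TL i b * D.TL h c = D.TL h c * D.TL i b := by
  apply Units.ext
  simp only [Units.val_mul]
  rw [D.TL_val, D.TL_val]
  simp only [mul_add, add_mul, one_mul, mul_one, 
    Matrix.single_mul_single_of_ne, ne_of1 hih, ne_of1 hih.symm, ne_eq, not_false_eq_true]
  abel

theorem R_long {i h : Idx n} (hih : i.1 ≠ h.1) (b c : A)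
    (hb : ∃ d ∈ D.Lambda, b = D.lpow (-(Idx.eps (Idx.neg i) + 1) / 2) * d) :
    D.TL (Idx.neg i) b * D.TS i h c = D.TS i h c * (D.TS (Idx.neg i) h (b * c) *
      D.TL (Idx.neg h) (D.lpow ((Idx.eps h - Idx.eps i) / 2) * D.bar c * (b * c))) *
        D.TL (Idx.neg i) b := by
  apply Units.ext
  simp only [Units.val_mul]
  rw [D.TS_val (ne_of hih), D.TS_val (ne_of1 hih), D.TL_val, D.TL_val]
  have e : D.lpow ((Idx.eps h - Idx.eps (Idx.neg i)) / 2) * (D.bar c * D.bar b) =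
      - (D.lpow ((Idx.eps h - Idx.eps i) / 2) * D.bar c * b) := by
    have hb' : D.bar b = -(D.lpow ((Idx.eps (Idx.neg i) - Idx.eps i) / 2) * b) := by
      obtain ⟨d, hd, rfl⟩ := hb
      have h0 := D.lambdaMax_mem d hd
      have h1 : D.bar d = - (D.bar D.lam * d) := by
        conv_rhs => rw [h0]
        rw [mul_neg, _root_.neg_neg, ← mul_assoc, D.bar_lam_mul, one_mul]
      rcases i with ⟨i, _ | _⟩ <;> simp [Idx.eps, Idx.neg]
      · rw [D.bar_mul, h1, D.bar_bar, ← mul_assoc, D.lam_bar, one_mul, neg_mul, ← D.lam_comm, ← mul_assoc, D.lam_bar, one_mul]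
      · exact h1
    rw [hb', mul_neg, mul_neg, ← D.lpow_eps i (Idx.neg i) h, ← mul_assoc (D.bar c), ← D.lpow_comm _ (D.bar c)]
    rw [D.lpow_comm ((Idx.eps (Idx.neg i) - Idx.eps i) / 2) (D.lpow _)]
    simp only [mul_assoc]
  unfold Xmat
  simp only [mul_add, add_mul, mul_sub, sub_mul, one_mul, mul_one, Matrix.single_mul_single_same, D.bar_mul, e,
    Matrix.single_mul_single_of_ne, ne_of hih, ne_of hih.symm,
    ne_of1 hih, ne_of1 hih.symm, ne_of2 hih, ne_of2 hih.symm, 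
    Idx.neg_ne, (Idx.neg_ne _).symm, ne_eq, not_false_eq_true, zero_mul, mul_zero,
    Idx.neg_injective.eq_iff, Idx.neg_neg, stdBasisMatrix_neg', neg_mul, mul_neg]
  abel

end FormRingData

namespace FormRingData

variable {A : Type*} [Ring A] {n : ℕ} (D : FormRingData A)

theorem EU_conj (I Γ : AddSubgroup A) :
    ∀ g ∈ D.EUmax n, ∀ x ∈ D.EU n I Γ, g * x * g⁻¹ ∈ D.EU n I Γ := by
  intro g hg x hx
  unfold EU at hx
  induction hx using Subgroup.closure_induction with
  | mem x hx =>
    obtain ⟨k, hk, t, ht, rfl⟩ := hx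
    exact Subgroup.subset_closure ⟨g * k, mul_mem hg hk, t, ht, by group⟩
  | one => simp
  | mul x y _ _ hx hy =>
    have : g * (x * y) * g⁻¹ = (g * x * g⁻¹) * (g * y * g⁻¹) := by group
    rw [this]; exact mul_mem hx hy
  | inv x _ hx =>
    have : g * x⁻¹ * g⁻¹ = (g * x * g⁻¹)⁻¹ := by group
    rw [this]; exact inv_mem hx

theorem gen_EU {I Γ : AddSubgroup A} {t : GLn A n} (ht : t ∈ D.transvGen n I Γ) :
    t ∈ D.EU n I Γ :=
  Subgroup.subset_closure ⟨1, one_mem _, t, ht, by simp⟩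

theorem TS_EU {I Γ : AddSubgroup A} {i j : Idx n} (h : i.1 ≠ j.1) {c : A} (hc : c ∈ I) :
    D.TS i j c ∈ D.EU n I Γ :=
  D.gen_EU (Or.inl ⟨i, j, ne_of h, ne_of2 h, c, hc, rfl⟩)

theorem TL_EU {I Γ : AddSubgroup A} {i : Idx n} {c : A}
    (hc : ∃ g ∈ Γ, c = D.lpow (-(Idx.eps i + 1) / 2) * g) : D.TL i c ∈ D.EU n I Γ := by
  obtain ⟨g, hg, rfl⟩ := hc
  exact D.gen_EU (Or.inr ⟨i, g, hg, rfl⟩)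

theorem TS_max {i j : Idx n} (h : i.1 ≠ j.1) (c : A) : D.TS i j c ∈ D.EUmax n :=
  Subgroup.subset_closure (Or.inl ⟨i, j, ne_of h, ne_of2 h, c, AddSubgroup.mem_top c, rfl⟩)

theorem TL_max {i : Idx n} {c : A}
    (hc : ∃ g ∈ D.Lambda, c = D.lpow (-(Idx.eps i + 1) / 2) * g) : D.TL i c ∈ D.EUmax n := by
  obtain ⟨g, hg, rfl⟩ := hc
  exact Subgroup.subset_closure (Or.inr ⟨i, g, hg, rfl⟩)

theorem symI_comm (I J : AddSubgroup A) : symI I J = symI J I := by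
  unfold symI; exact sup_comm _ _

theorem EUsym_comm (I Γ J Δ : AddSubgroup A) : D.EUsym n I Γ J Δ = D.EUsym n J Δ I Γ := by
  unfold EUsym symG
  rw [symI_comm, sup_right_comm]

theorem symI_l {I J : AddSubgroup A} {a b : A} (ha : a ∈ I) (hb : b ∈ J) : a * b ∈ symI I J :=
  (le_sup_left : mulSub I J ≤ _) (AddSubgroup.subset_closure ⟨a, ha, b, hb, rfl⟩)

theorem symI_r {I J : AddSubgroup A} {a b : A} (ha : a ∈ I) (hb : b ∈ J) : b * a ∈ symI I J := by
  rw [symI_comm]; exact symI_l hb ha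

theorem symG_l {I Γ J Δ : AddSubgroup A} {g b : A} (hg : g ∈ Γ) (hb : b ∈ J) :
    b * g * D.bar b ∈ D.symG I Γ J Δ :=
  AddSubgroup.mem_sup_left (AddSubgroup.mem_sup_right
    (AddSubgroup.subset_closure ⟨b, hb, g, hg, rfl⟩))

theorem symG_r {I Γ J Δ : AddSubgroup A} {d a : A} (hd : d ∈ Δ) (ha : a ∈ I) :
    a * d * D.bar a ∈ D.symG I Γ J Δ :=
  AddSubgroup.mem_sup_right (AddSubgroup.subset_closure ⟨a, ha, d, hd, rfl⟩)

theorem z_eq (i h : Idx n) (c d : A) :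
    D.lpow ((Idx.eps h - Idx.eps i) / 2) * D.bar c *
      (D.lpow (-(Idx.eps (Idx.neg i) + 1) / 2) * d * c) =
    D.lpow (-(Idx.eps (Idx.neg h) + 1) / 2) * (D.bar c * d * D.bar (D.bar c)) := by
  rw [D.bar_bar, mul_assoc _ d c, lam_swap _ (D.lpow_comm _), mul_assoc (D.bar c)]
  congr 1
  rcases i with ⟨i, _ | _⟩ <;> rcases h with ⟨h, _ | _⟩ <;>
    simp [Idx.eps, Idx.neg, D.lam_bar]

variable (FI FJ : FormIdeal D)

theorem lam_mem {Γ : AddSubgroup A} (h : Γ ≤ D.Lambda) {k : ℤ} {a : A}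
    (ha : ∃ g ∈ Γ, a = D.lpow k * g) : ∃ g ∈ D.Lambda, a = D.lpow k * g := by
  obtain ⟨g, hg, e⟩ := ha
  exact ⟨g, h hg, e⟩

theorem long1 {i h : Idx n} (hih : i.1 ≠ h.1) {a b : A} (c : A)
    (ha : ∃ g ∈ FI.Gamma, a = D.lpow (-(Idx.eps i + 1) / 2) * g)
    (hb : ∃ g ∈ FJ.Gamma, b = D.lpow (-(Idx.eps (Idx.neg i) + 1) / 2) * g) :
    ⁅⁅D.TL i a, D.TL (Idx.neg i) b⁆, D.TS i h c⁆ ∈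
      D.EUsym n FI.I FI.Gamma FJ.I FJ.Gamma := by
  have hN := D.EU_conj (n := n) (symI FI.I FJ.I) (D.symG FI.I FI.Gamma FJ.I FJ.Gamma)
  have hih' : (Idx.neg i).1 ≠ h.1 := hih
  have hih'' : i.1 ≠ (Idx.neg h).1 := hih
  have ha' := D.lam_mem FI.gamma_le_Lambda ha
  have hb' := D.lam_mem FJ.gamma_le_Lambda hb
  have bI : b ∈ FJ.I := by
    obtain ⟨d, hd, rfl⟩ := hb
    exact FJ.mul_mem_left _ _ (FJ.gamma_le_I hd)
  have aI : a ∈ FI.I := by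
    obtain ⟨d, hd, rfl⟩ := ha
    exact FI.mul_mem_left _ _ (FI.gamma_le_I hd)
  have bcJ : b * c ∈ FJ.I := FJ.mul_mem_right _ _ bI
  refine comm_comm hN (D.TL_max ha') (D.TL_max hb') (D.TS_max hih c) (D.R_long hih b c hb') ?_ ?_ ?_
  · rw [commutatorElement_eq_one_iff_mul_comm.2 (D.C_long hih a c)]
    exact one_mem _
  · have c1 : D.TS (Idx.neg i) h (b * c) ∈ cmz _ _ hN (D.TL i a) := by
      refine ⟨D.TS_max hih' _, ?_⟩
      have e := D.R_long (i := Idx.neg i) (h := h) hih' a (b * c)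
        (by rw [Idx.neg_neg]; exact ha')
      rw [Idx.neg_neg] at e
      refine commRel hN (D.TS_max hih' _) ?_ e
      refine mul_mem (D.TS_EU hih (symI_l aI bcJ)) (D.TL_EU ?_)
      obtain ⟨g, hg, rfl⟩ := ha
      have z := D.z_eq (Idx.neg i) h (b * c) g
      rw [Idx.neg_neg] at z
      exact ⟨_, D.symG_l hg (FJ.bar_mem _ bcJ), z⟩
    have c2 : D.TL (Idx.neg h) (D.lpow ((Idx.eps h - Idx.eps i) / 2) * D.bar c * (b * c))
        ∈ cmz _ _ hN (D.TL i a) := by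
      refine ⟨D.TL_max ?_, ?_⟩
      · obtain ⟨d, hd, rfl⟩ := hb'
        exact ⟨_, D.lambda_conj _ _ hd, D.z_eq i h c d⟩
      · rw [commutatorElement_eq_one_iff_mul_comm.2 (D.C_ll hih'' _ _)]
        exact one_mem _
    exact (mul_mem c1 c2).2
  · rw [commutatorElement_eq_one_iff_mul_comm.2]
    · exact one_mem _
    · rw [← mul_assoc, D.C_long hih', mul_assoc,
        D.C_ll (i := Idx.neg i) (h := Idx.neg h) hih]
      exact (mul_assoc _ _ _).symm

theorem comm_swap {N : Subgroup (GLn A n)} {M : Subgroup (GLn A n)}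
    (hN : ∀ g ∈ M, ∀ x ∈ N, g * x * g⁻¹ ∈ N) {x y t : GLn A n} (hx : x ∈ M) (hy : y ∈ M)
    (h : ⁅⁅x, y⁆, t⁆ ∈ N) : ⁅⁅y, x⁆, t⁆ ∈ N := by
  rw [← commutatorElement_inv x y]
  have hm : ⁅x, y⁆ ∈ M := by
    rw [commutatorElement_def]
    exact mul_mem (mul_mem (mul_mem hx hy) (inv_mem hx)) (inv_mem hy)
  have e : ⁅⁅x, y⁆⁻¹, t⁆ = ⁅x, y⁆⁻¹ * ⁅⁅x, y⁆, t⁆⁻¹ * ⁅x, y⁆ := by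
    generalize ⁅x, y⁆ = z
    simp only [commutatorElement_def]; group
  rw [e]
  exact conj_mem' hN hm (inv_mem h)

theorem long2 (hn : 3 ≤ n) {i : Idx n} {a b c : A}
    (ha : ∃ g ∈ FI.Gamma, a = D.lpow (-(Idx.eps i + 1) / 2) * g)
    (hb : ∃ g ∈ FJ.Gamma, b = D.lpow (-(Idx.eps (Idx.neg i) + 1) / 2) * g)
    (hc : ∃ g ∈ D.Lambda, c = D.lpow (-(Idx.eps i + 1) / 2) * g) :
    ⁅⁅D.TL i a, D.TL (Idx.neg i) b⁆, D.TL i c⁆ ∈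
      D.EUsym n FI.I FI.Gamma FJ.I FJ.Gamma := by
  have hN := D.EU_conj (n := n) (symI FI.I FJ.I) (D.symG FI.I FI.Gamma FJ.I FJ.Gamma)
  have ha' := D.lam_mem FI.gamma_le_Lambda ha
  have hb' := D.lam_mem FJ.gamma_le_Lambda hb
  obtain ⟨m, hm⟩ : ∃ m : Fin n, m ≠ i.1 := by
    have : Nontrivial (Fin n) := Fin.nontrivial_iff_two_le.2 (by omega)
    exact exists_ne _
  -- `k` has the sign of `-i`
  let k : Idx n := Idx.neg (m, i.2)
  have hk : k.1 ≠ (Idx.neg i).1 := hm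
  have hik : i.1 ≠ k.1 := fun e => hm e.symm
  have hik' : i.1 ≠ (Idx.neg k).1 := hik
  have ek : Idx.eps (Idx.neg k) = Idx.eps i := by simp [k, Idx.neg, Idx.eps]
  have ek' : Idx.eps (Idx.neg i) = Idx.eps k := by rw [eps_neg, ← ek, eps_neg]; simp
  clear_value k
  have hck : ∃ g ∈ D.Lambda, c = D.lpow (-(Idx.eps (Idx.neg k) + 1) / 2) * g := by rwa [ek]
  have R := D.R_long hk c 1 hck
  rw [ek', Idx.neg_neg i] at R
  simp only [sub_self, Int.zero_ediv, lpow_zero, D.bar_one, one_mul, mul_one] at R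
  have key : ∀ (h : Idx n) (h' : i.1 ≠ h.1) (x : A), D.TS h (Idx.neg i) x ∈
      cmz _ _ hN ⁅D.TL i a, D.TL (Idx.neg i) b⁆ := by
    intro h h' x
    have h2 : h.1 ≠ (Idx.neg i).1 := h'.symm
    have h3 : i.1 ≠ (Idx.neg h).1 := h'
    refine ⟨D.TS_max h2 x, ?_⟩
    rw [D.TS_sym _ _ (ne_of2 h'.symm), Idx.neg_neg]
    exact D.long1 FI FJ h3 _ ha hb
  have c1 := key k hik 1
  have c2 := key (Idx.neg k) hik c
  have c3 : D.TL (Idx.neg k) c ∈ cmz _ _ hN ⁅D.TL i a, D.TL (Idx.neg i) b⁆ := by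
    refine ⟨D.TL_max hck, ?_⟩
    rw [commutatorElement_eq_one_iff_commute.2]
    · exact one_mem _
    · have h1 : Commute (D.TL i a) (D.TL (Idx.neg k) c) := D.C_ll hik' a c
      have h2 : Commute (D.TL (Idx.neg i) b) (D.TL (Idx.neg k) c) :=
        D.C_ll (i := Idx.neg i) (h := Idx.neg k) hik b c
      rw [commutatorElement_def]
      exact ((h1.mul_left h2).mul_left h1.inv_left).mul_left h2.inv_left
  have e : D.TL i c = (D.TS (Idx.neg k) (Idx.neg i) c)⁻¹ * (D.TS k (Idx.neg i) 1)⁻¹ *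
      (D.TL (Idx.neg k) c * D.TS k (Idx.neg i) 1) * (D.TL (Idx.neg k) c)⁻¹ := by
    rw [R]; group
  have : D.TL i c ∈ cmz _ _ hN ⁅D.TL i a, D.TL (Idx.neg i) b⁆ := by
    rw [e]
    exact mul_mem (mul_mem (mul_mem (inv_mem c2) (inv_mem c1)) (mul_mem c3 c1)) (inv_mem c3)
  exact this.2

theorem short1 {i j h : Idx n} (hij : i.1 ≠ j.1) (hih : i.1 ≠ h.1) (hjh : j.1 ≠ h.1) {a b : A}
    (ha : a ∈ FI.I) (hb : b ∈ FJ.I) (c : A) :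
    ⁅⁅D.TS i j a, D.TS j i b⁆, D.TS i h c⁆ ∈ D.EUsym n FI.I FI.Gamma FJ.I FJ.Gamma := by
  have hN := D.EU_conj (n := n) (symI FI.I FJ.I) (D.symG FI.I FI.Gamma FJ.I FJ.Gamma)
  have bcJ : b * c ∈ FJ.I := FJ.mul_mem_right _ _ hb
  refine comm_comm hN (D.TS_max hij a) (D.TS_max hij.symm b) (D.TS_max hih c)
    (D.R_short hij hih hjh b c) ?_ ?_ ?_
  · rw [commutatorElement_eq_one_iff_mul_comm.2 (D.C_short hij hih hjh a c)]
    exact one_mem _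
  · exact commRel hN (D.TS_max hjh _) (D.TS_EU hih (symI_l ha bcJ))
      (D.R_short hij.symm hjh hih a (b * c))
  · rw [commutatorElement_eq_one_iff_mul_comm.2 (D.C_short hij.symm hjh hih b _)]
    exact one_mem _

theorem short2 (hn : 3 ≤ n) {i j : Idx n} (hij : i.1 ≠ j.1) {a b : A}
    (ha : a ∈ FI.I) (hb : b ∈ FJ.I) (c : A) :
    ⁅⁅D.TS i j a, D.TS j i b⁆, D.TS i j c⁆ ∈ D.EUsym n FI.I FI.Gamma FJ.I FJ.Gamma := by
  have hN := D.EU_conj (n := n) (symI FI.I FJ.I) (D.symG FI.I FI.Gamma FJ.I FJ.Gamma)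
  obtain ⟨m, hm⟩ : ∃ m : Fin n, m ∉ ({i.1, j.1} : Finset (Fin n)) := by
    by_contra hcon
    push Not at hcon
    have h1 : (Finset.univ : Finset (Fin n)) ⊆ {i.1, j.1} := fun x _ => hcon x
    have h2 := Finset.card_le_card h1
    have h3 : ({i.1, j.1} : Finset (Fin n)).card ≤ 2 := Finset.card_le_two
    simp only [Finset.card_univ, Fintype.card_fin] at h2
    omega
  simp only [Finset.mem_insert, Finset.mem_singleton, not_or] at hm
  let h : Idx n := (m, true)
  have hih : i.1 ≠ h.1 := fun e => hm.1 e.symm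
  have hjh : j.1 ≠ h.1 := fun e => hm.2 e.symm
  have c1 : D.TS i h c ∈ cmz _ _ hN ⁅D.TS i j a, D.TS j i b⁆ :=
    ⟨D.TS_max hih c, D.short1 FI FJ hij hih hjh ha hb c⟩
  have c2 : D.TS h j 1 ∈ cmz _ _ hN ⁅D.TS i j a, D.TS j i b⁆ := by
    refine ⟨D.TS_max hjh.symm 1, ?_⟩
    rw [D.TS_sym i j (ne_of hij), D.TS_sym j i (ne_of hij.symm), D.TS_sym h j (ne_of hjh.symm)]
    exact D.short1 FI FJ (i := Idx.neg j) (j := Idx.neg i) (h := Idx.neg h) hij.symm hjh hih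
      (neg_mem (FI.mul_mem_left _ _ (FI.bar_mem _ ha)))
      (neg_mem (FJ.mul_mem_left _ _ (FJ.bar_mem _ hb))) _
  have R := D.R_short hih.symm hjh.symm hij c 1
  rw [mul_one] at R
  have e : D.TS i j c = (D.TS h j 1)⁻¹ * (D.TS i h c * D.TS h j 1) * (D.TS i h c)⁻¹ := by
    rw [R]; group
  have : D.TS i j c ∈ cmz _ _ hN ⁅D.TS i j a, D.TS j i b⁆ := by
    rw [e]
    exact mul_mem (mul_mem (inv_mem c2) (mul_mem c1 c2)) (inv_mem c1)
  exact this.2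

theorem T_max {i j : Idx n} (hij : i ≠ j) {a : A} (ha : D.pmem FI.I FI.Gamma i j a) :
    D.T i j a ∈ D.EUmax n := by
  unfold T
  unfold pmem at ha
  split_ifs at ha ⊢ with h
  · exact D.TL_max (D.lam_mem FI.gamma_le_Lambda ha)
  · exact D.TS_max (fst_ne hij (fun e => h (by rw [e, Idx.neg_neg]))) a

theorem T_add {i j : Idx n} (hij : i ≠ j) (a b : A) : D.T i j (a + b) = D.T i j a * D.T i j b := by
  unfold T
  split_ifs
  · exact D.TL_add i a b
  · exact D.TS_add i j hij a b

theorem T_zero {i j : Idx n} (hij : i ≠ j) : D.T i j 0 = 1 := by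
  have := D.T_add hij 0 0
  rw [add_zero] at this
  exact left_eq_mul.mp this

theorem key1 (hn : 3 ≤ n) {i j : Idx n} (hij : i ≠ j) {a b c : A}
    (ha : D.pmem FI.I FI.Gamma i j a) (hb : D.pmem FJ.I FJ.Gamma j i b)
    (hc : D.pmem FI.I FI.Gamma i j c) :
    ⁅D.Y i j a b, D.T i j c⁆ ∈ D.EUsym n FI.I FI.Gamma FJ.I FJ.Gamma := by
  unfold Y
  by_cases h : j = Idx.neg i
  · subst h
    have h' : i = Idx.neg (Idx.neg i) := (Idx.neg_neg i).symm
    unfold pmem at ha hb hc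
    rw [if_pos rfl] at ha hc
    rw [if_pos h'] at hb
    unfold T
    rw [if_pos rfl, if_pos h', if_pos rfl]
    exact D.long2 FI FJ hn ha hb (D.lam_mem FI.gamma_le_Lambda hc)
  · have h' : ¬ i = Idx.neg j := fun e => h (by rw [e, Idx.neg_neg])
    unfold pmem at ha hb hc
    rw [if_neg h] at ha hc
    rw [if_neg h'] at hb
    unfold T
    rw [if_neg h, if_neg h', if_neg h]
    exact D.short2 FI FJ hn (fst_ne hij h') ha hb c

theorem key2 (hn : 3 ≤ n) {i j : Idx n} (hij : i ≠ j) {a b c : A}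
    (ha : D.pmem FI.I FI.Gamma i j a) (hb : D.pmem FJ.I FJ.Gamma j i b)
    (hc : D.pmem FJ.I FJ.Gamma j i c) :
    ⁅D.Y i j a b, D.T j i c⁆ ∈ D.EUsym n FI.I FI.Gamma FJ.I FJ.Gamma := by
  have hN := D.EU_conj (n := n) (symI FI.I FJ.I) (D.symG FI.I FI.Gamma FJ.I FJ.Gamma)
  refine comm_swap hN (D.T_max FJ hij.symm hb) (D.T_max FI hij ha) ?_
  have := D.key1 FJ FI hn hij.symm hb ha hc
  rw [EUsym_comm] at this
  exact this

theorem pmem_neg {i j : Idx n} {a : A} (ha : D.pmem FI.I FI.Gamma i j a) :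
    D.pmem FI.I FI.Gamma i j (-a) := by
  unfold pmem at ha ⊢
  split_ifs at ha ⊢ with h
  · obtain ⟨g, hg, rfl⟩ := ha
    exact ⟨-g, neg_mem hg, by rw [mul_neg]⟩
  · exact neg_mem ha

theorem conj_form (k : ℤ) (x g : A) :
    D.bar x * (D.lpow k * g) * x = D.lpow k * (D.bar x * g * D.bar (D.bar x)) := by
  rw [D.bar_bar, ← mul_assoc, ← D.lpow_comm]
  simp only [mul_assoc]

end FormRingData

/-- Theorem (symbol properties of elementary commutators): additivity in both
arguments, inverses, and vanishing properties, all modulo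
`EU(2n,(I,Γ)∘(J,Δ))`. -/
theorem statement10 {A : Type*} [Ring A] (D : FormRingData A) (n : ℕ) (hn : 3 ≤ n)
    (FI FJ : FormIdeal D) :
    (∀ i j : Idx n, i ≠ j → ∀ a₁ a₂ b : A,
      D.pmem FI.I FI.Gamma i j a₁ → D.pmem FI.I FI.Gamma i j a₂ →
      D.pmem FJ.I FJ.Gamma j i b →
      D.Y i j (a₁ + a₂) b * (D.Y i j a₁ b * D.Y i j a₂ b)⁻¹ ∈
        D.EUsym n FI.I FI.Gamma FJ.I FJ.Gamma) ∧
    (∀ i j : Idx n, i ≠ j → ∀ a b₁ b₂ : A,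
      D.pmem FI.I FI.Gamma i j a → D.pmem FJ.I FJ.Gamma j i b₁ →
      D.pmem FJ.I FJ.Gamma j i b₂ →
      D.Y i j a (b₁ + b₂) * (D.Y i j a b₁ * D.Y i j a b₂)⁻¹ ∈
        D.EUsym n FI.I FI.Gamma FJ.I FJ.Gamma) ∧
    (∀ i j : Idx n, i ≠ j → ∀ a b : A,
      D.pmem FI.I FI.Gamma i j a → D.pmem FJ.I FJ.Gamma j i b →
      (D.Y i j a b)⁻¹ * (D.Y i j (-a) b)⁻¹ ∈
          D.EUsym n FI.I FI.Gamma FJ.I FJ.Gamma ∧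
        D.Y i j (-a) b * (D.Y i j a (-b))⁻¹ ∈
          D.EUsym n FI.I FI.Gamma FJ.I FJ.Gamma) ∧
    (∀ i j : Idx n, i ≠ j → i ≠ Idx.neg j →
      ∀ a ∈ FI.I, ∀ a₁ ∈ FI.I, ∀ a₂ ∈ FI.I, ∀ b ∈ FJ.I, ∀ b₁ ∈ FJ.I, ∀ b₂ ∈ FJ.I,
      D.Y i j (a * b₁) b₂ ∈ D.EUsym n FI.I FI.Gamma FJ.I FJ.Gamma ∧
        D.Y i j a₁ (a₂ * b) ∈ D.EUsym n FI.I FI.Gamma FJ.I FJ.Gamma) ∧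
    (∀ i : Idx n, ∀ a a₁ b b₂ : A,
      (∃ g ∈ FI.Gamma, a = D.lpow (-(Idx.eps i + 1) / 2) * g) →
      (∃ g ∈ FI.Gamma, a₁ = D.lpow (-(Idx.eps i + 1) / 2) * g) →
      (∃ d ∈ FJ.Gamma, b = D.lpow ((Idx.eps i - 1) / 2) * d) →
      (∃ d ∈ FJ.Gamma, b₂ = D.lpow ((Idx.eps i - 1) / 2) * d) →
      ∀ b₁ ∈ FJ.I, ∀ a₂ ∈ FI.I,
      D.Y i (Idx.neg i) (D.bar b₁ * a * b₁) b₂ ∈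
          D.EUsym n FI.I FI.Gamma FJ.I FJ.Gamma ∧
        D.Y i (Idx.neg i) a₁ (D.bar a₂ * b * a₂) ∈
          D.EUsym n FI.I FI.Gamma FJ.I FJ.Gamma) := by
  have hN := D.EU_conj (n := n) (FormRingData.symI FI.I FJ.I) (D.symG FI.I FI.Gamma FJ.I FJ.Gamma)
  have P1 : ∀ i j : Idx n, i ≠ j → ∀ a₁ a₂ b : A,
      D.pmem FI.I FI.Gamma i j a₁ → D.pmem FI.I FI.Gamma i j a₂ →
      D.pmem FJ.I FJ.Gamma j i b →
      D.Y i j (a₁ + a₂) b * (D.Y i j a₁ b * D.Y i j a₂ b)⁻¹ ∈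
        D.EUsym n FI.I FI.Gamma FJ.I FJ.Gamma := by
    intro i j hij a₁ a₂ b h1 h2 hb
    have k1 := D.key1 FI FJ hn hij h2 hb h1
    have k2 := D.key2 FI FJ hn hij h2 hb hb
    unfold FormRingData.Y at k1 k2 ⊢
    rw [D.T_add hij]
    exact add1 hN (D.T_max FI hij h1) (D.T_max FJ hij.symm hb) k1 k2
  have P2 : ∀ i j : Idx n, i ≠ j → ∀ a b₁ b₂ : A,
      D.pmem FI.I FI.Gamma i j a → D.pmem FJ.I FJ.Gamma j i b₁ →
      D.pmem FJ.I FJ.Gamma j i b₂ →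
      D.Y i j a (b₁ + b₂) * (D.Y i j a b₁ * D.Y i j a b₂)⁻¹ ∈
        D.EUsym n FI.I FI.Gamma FJ.I FJ.Gamma := by
    intro i j hij a b₁ b₂ ha h1 h2
    have k1 := D.key2 FI FJ hn hij ha h2 h1
    unfold FormRingData.Y at k1 ⊢
    rw [D.T_add hij.symm]
    exact add2 hN (D.T_max FI hij ha) (D.T_max FJ hij.symm h1) k1
  refine ⟨P1, P2, ?_, ?_, ?_⟩
  · intro i j hij a b ha hb
    have q1 := P1 i j hij (-a) a b (D.pmem_neg FI ha) ha hb
    have q2 := P2 i j hij a b (-b) ha hb (D.pmem_neg FJ hb)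
    have z1 : D.Y i j 0 b = 1 := by simp [FormRingData.Y, D.T_zero hij]
    have z2 : D.Y i j a 0 = 1 := by simp [FormRingData.Y, D.T_zero hij.symm]
    rw [neg_add_cancel, z1, one_mul, _root_.mul_inv_rev] at q1
    rw [add_neg_cancel, z2, one_mul, _root_.mul_inv_rev] at q2
    refine ⟨q1, ?_⟩
    have hYa : D.Y i j a b ∈ D.EUmax n := by
      have u1 := D.T_max FI hij ha
      have u2 := D.T_max FJ hij.symm hb
      unfold FormRingData.Y
      rw [commutatorElement_def]
      exact mul_mem (mul_mem (mul_mem u1 u2) (inv_mem u1)) (inv_mem u2)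
    have q5 := conj_mem' hN hYa q2
    have e : D.Y i j (-a) b * (D.Y i j a (-b))⁻¹ =
      (((D.Y i j a b)⁻¹ * (D.Y i j (-a) b)⁻¹)⁻¹) *
        ((D.Y i j a b)⁻¹ * ((D.Y i j a (-b))⁻¹ * (D.Y i j a b)⁻¹) * D.Y i j a b) := by
      group
    rw [e]
    exact mul_mem (inv_mem q1) q5
  · intro i j hij hij' a ha a₁ ha₁ a₂ ha₂ b hb b₁ hb₁ b₂ hb₂
    have hf := FormRingData.fst_ne hij hij'
    have h : ¬ j = Idx.neg i := fun e => hij' (by rw [e, Idx.neg_neg])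
    unfold FormRingData.Y FormRingData.T
    simp only [if_neg h, if_neg hij']
    exact ⟨commL hN (D.TS_EU hf (FormRingData.symI_l ha hb₁)) (D.TS_max hf.symm _),
      commR hN (D.TS_max hf _) (D.TS_EU hf.symm (FormRingData.symI_l ha₂ hb))⟩
  · intro i a a₁ b b₂ ha ha₁ hb hb₂ b₁ hb₁ a₂ ha₂
    have h' : i = Idx.neg (Idx.neg i) := (Idx.neg_neg i).symm
    have ee : (Idx.eps i - 1) / 2 = -(Idx.eps (Idx.neg i) + 1) / 2 := by
      rw [FormRingData.eps_neg]; congr 1; ring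
    rw [ee] at hb hb₂
    unfold FormRingData.Y FormRingData.T
    simp only [if_pos h', if_true]
    constructor
    · refine commL hN (D.TL_EU ?_) (D.TL_max (D.lam_mem FJ.gamma_le_Lambda hb₂))
      obtain ⟨g, hg, rfl⟩ := ha
      exact ⟨_, D.symG_l hg (FJ.bar_mem _ hb₁), D.conj_form _ _ _⟩
    · refine commR hN (D.TL_max (D.lam_mem FI.gamma_le_Lambda ha₁)) (D.TL_EU ?_)
      obtain ⟨g, hg, rfl⟩ := hb
      exact ⟨_, D.symG_r hg (FI.bar_mem _ ha₂), D.conj_form _ _ _⟩
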